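/- The Baker–Akhiezer function of the Clifford torus evaluated at the spectral point λ = (1−i)/4 satisfies the Dirac equation with the Clifford torus potential: with ψ₁(x,y) = ((1+i)/4) e^{−ix/2} (2e^{iy/2} + √2(1−i)e^{−iy/2})/(sin y − √2), ψ₂(x,y) = −(√2/4) e^{−ix/2} (2e^{iy/2} − √2(1+i)e^{−iy/2})/(sin y − √2), and U(x,y) = sin y/(2√2(√2 − sin y)), the identities ∂ψ₂ + U ψ₁ = 0 and −∂̄ψ₁ + U ψ₂ = 0 hold for all (x,y) ∈ ℝ². -/

import Mathlib

/-!
Both components have the form `exp (-i x / 2) * g y`, so the Dirac equation separates into the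
linear system `g₁' = g₁ / 2 - 2 i U g₂`, `g₂' = -g₂ / 2 - 2 i U g₁`. Let `r` be a square root of `2`
and `g r y = N r y / (sin y - r)`, where `N r y = ((1 + i) exp (i y / 2) + r exp (-i y / 2)) / 2`.
Then `g₁ y = g √2 y` and `g₂ y = -g (-√2) (-y)`. The substitution `(r, y) ↦ (-r, -y)` reverses the
sign of `U`, hence exchanges the two equations, and only the first one has to be verified.
It follows from `N' r y = N r y / 2 - (r / 2) N r (-y)` and Euler's formula.
-/

open Real Complex

/-- Wirtinger derivative ∂f = (1/2)(∂f/∂x − i ∂f/∂y). -/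
noncomputable def wirtingerD (f : ℝ → ℝ → ℂ) (x y : ℝ) : ℂ :=
  (1 / 2) * (deriv (fun t => f t y) x - Complex.I * deriv (fun t => f x t) y)

/-- Wirtinger derivative ∂̄f = (1/2)(∂f/∂x + i ∂f/∂y). -/
noncomputable def wirtingerDbar (f : ℝ → ℝ → ℂ) (x y : ℝ) : ℂ :=
  (1 / 2) * (deriv (fun t => f t y) x + Complex.I * deriv (fun t => f x t) y)

/-- First component of the Baker–Akhiezer function of the Clifford torus at
the spectral point λ = (1−i)/4. -/
noncomputable def cliffordPsi₁ : ℝ → ℝ → ℂ := fun x y =>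
  ((1 + Complex.I) / 4) * Complex.exp (-Complex.I * (x : ℂ) / 2)
    * (2 * Complex.exp (Complex.I * (y : ℂ) / 2)
        + (Real.sqrt 2 : ℂ) * (1 - Complex.I) * Complex.exp (-Complex.I * (y : ℂ) / 2))
    / ((Real.sin y : ℂ) - (Real.sqrt 2 : ℂ))

/-- Second component of the Baker–Akhiezer function of the Clifford torus at
the spectral point λ = (1−i)/4. -/
noncomputable def cliffordPsi₂ : ℝ → ℝ → ℂ := fun x y =>
  -((Real.sqrt 2 : ℂ) / 4) * Complex.exp (-Complex.I * (x : ℂ) / 2)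
    * (2 * Complex.exp (Complex.I * (y : ℂ) / 2)
        - (Real.sqrt 2 : ℂ) * (1 + Complex.I) * Complex.exp (-Complex.I * (y : ℂ) / 2))
    / ((Real.sin y : ℂ) - (Real.sqrt 2 : ℂ))

/-- The potential of the Weierstrass representation of the Clifford torus. -/
noncomputable def cliffordU : ℝ → ℝ → ℂ := fun _ y =>
  ((Real.sin y / (2 * Real.sqrt 2 * (Real.sqrt 2 - Real.sin y)) : ℝ) : ℂ)

section SeparationOfVariables

variable {g : ℝ → ℂ} {g' : ℂ} {y : ℝ}

lemma hasDerivAt_exp_mul_ofReal (a : ℂ) (x : ℝ) :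
    HasDerivAt (fun t : ℝ => Complex.exp (a * t)) (a * Complex.exp (a * x)) x := by
  simpa [mul_comm] using ((hasDerivAt_id (x : ℂ)).const_mul a).cexp.comp_ofReal

lemma wirtingerD_exp_mul (a : ℂ) (x : ℝ) (hg : HasDerivAt g g' y) :
    wirtingerD (fun s t => Complex.exp (a * s) * g t) x y
      = Complex.exp (a * x) * (a * g y - I * g') / 2 := by
  rw [wirtingerD, ((hasDerivAt_exp_mul_ofReal a x).mul_const (g y)).deriv,
    (hg.const_mul (Complex.exp (a * x))).deriv]
  ring

lemma wirtingerDbar_exp_mul (a : ℂ) (x : ℝ) (hg : HasDerivAt g g' y) :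
    wirtingerDbar (fun s t => Complex.exp (a * s) * g t) x y
      = Complex.exp (a * x) * (a * g y + I * g') / 2 := by
  rw [wirtingerDbar, ((hasDerivAt_exp_mul_ofReal a x).mul_const (g y)).deriv,
    (hg.const_mul (Complex.exp (a * x))).deriv]
  ring

lemma dirac_equation_exp_mul {g₁ g₂ : ℝ → ℂ} (a u : ℂ) (x : ℝ)
    (h₁ : HasDerivAt g₁ (I * a * g₁ y - 2 * I * u * g₂ y) y)
    (h₂ : HasDerivAt g₂ (-(I * a * g₂ y) - 2 * I * u * g₁ y) y) :
    wirtingerD (fun s t => Complex.exp (a * s) * g₂ t) x y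
        + u * (Complex.exp (a * x) * g₁ y) = 0 ∧
      -wirtingerDbar (fun s t => Complex.exp (a * s) * g₁ t) x y
        + u * (Complex.exp (a * x) * g₂ y) = 0 := by
  rw [wirtingerD_exp_mul a x h₂, wirtingerDbar_exp_mul a x h₁]
  constructor
  · linear_combination Complex.exp (a * x) * (a * g₂ y + 2 * u * g₁ y) / 2 * I_sq
  · linear_combination Complex.exp (a * x) * (2 * u * g₂ y - a * g₁ y) / 2 * I_sq

end SeparationOfVariables

/-- The potential of the Clifford torus as a function of a complex variable, with `√2` replaced by
a parameter `r` so that the symmetry `(r, y) ↦ (-r, -y)` can be expressed. -/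
noncomputable def cliffordPotential (r y : ℂ) : ℂ :=
  Complex.sin y / (2 * r * (r - Complex.sin y))

/-- The numerator of the `y`-dependent factor of the Baker–Akhiezer function. The choice `r = √2`
gives the first component, and `r = -√2` at `-y` gives the second. -/
noncomputable def cliffordNumerator (r y : ℂ) : ℂ :=
  ((1 + I) * Complex.exp (I * y / 2) + r * Complex.exp (-I * y / 2)) / 2

/-- The `y`-dependent factor of the Baker–Akhiezer function, with the same convention on `r` as
`cliffordNumerator`; the second component carries an additional sign. -/
noncomputable def cliffordProfile (r y : ℂ) : ℂ :=
  cliffordNumerator r y / (Complex.sin y - r)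

lemma cliffordPotential_neg_neg (r y : ℂ) :
    cliffordPotential (-r) (-y) = -cliffordPotential r y := by
  rw [cliffordPotential, cliffordPotential, Complex.sin_neg, ← neg_div]
  congr 1
  ring

lemma exp_half_mul_cos_sub_sin (y : ℂ) :
    Complex.exp (I * y / 2) * (Complex.cos y - Complex.sin y * I) = Complex.exp (-I * y / 2) := by
  have euler : Complex.cos y - Complex.sin y * I = Complex.exp (-y * I) := by
    rw [Complex.exp_mul_I, Complex.cos_neg, Complex.sin_neg, neg_mul, sub_eq_add_neg]
  rw [euler, ← Complex.exp_add]
  congr 1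
  ring

lemma exp_neg_half_mul_cos_add_sin (y : ℂ) :
    Complex.exp (-I * y / 2) * (Complex.cos y + Complex.sin y * I) = Complex.exp (I * y / 2) := by
  simpa using exp_half_mul_cos_sub_sin (-y)

section SquareRootOfTwo

variable {r : ℂ}

lemma hasDerivAt_cliffordNumerator (hr : r ^ 2 = 2) (y : ℂ) :
    HasDerivAt (cliffordNumerator r)
      (cliffordNumerator r y / 2 - r / 2 * cliffordNumerator r (-y)) y := by
  have hexp (c : ℂ) :
      HasDerivAt (fun t => Complex.exp (c * t / 2)) (Complex.exp (c * y / 2) * (c / 2)) y := by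
    simpa using (((hasDerivAt_id y).const_mul c).div_const 2).cexp
  refine ((((hexp I).const_mul (1 + I)).add ((hexp (-I)).const_mul r)).div_const 2).congr_deriv ?_
  simp only [cliffordNumerator, mul_neg, neg_mul, neg_neg]
  linear_combination Complex.exp (I * y / 2) / 4 * I_sq + Complex.exp (I * y / 2) / 4 * hr

lemma cliffordNumerator_reflection (hr : r ^ 2 = 2) (y : ℂ) :
    r / 2 * (r - Complex.sin y) * cliffordNumerator r (-y)
      = Complex.cos y * cliffordNumerator r y
        + I * Complex.sin y * r / 2 * cliffordNumerator (-r) (-y) := by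
  have hE := exp_half_mul_cos_sub_sin y
  have hF := exp_neg_half_mul_cos_add_sin y
  simp only [cliffordNumerator, mul_neg, neg_mul, neg_neg] at hE hF ⊢
  linear_combination -(1 + I) / 2 * hE - r / 2 * hF
    + ((1 + I) * Complex.exp (-(I * y) / 2)
      + (r - Complex.sin y + I * Complex.sin y) * Complex.exp (I * y / 2)) / 4 * hr
    - Complex.sin y * (Complex.exp (I * y / 2) + r / 2 * Complex.exp (-(I * y) / 2)) / 2 * I_sq

lemma hasDerivAt_cliffordProfile (hr : r ^ 2 = 2) {y : ℂ} (hy : Complex.sin y ≠ r) :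
    HasDerivAt (cliffordProfile r)
      (cliffordProfile r y / 2
        + 2 * I * cliffordPotential r y * cliffordProfile (-r) (-y)) y := by
  have hr₀ : r ≠ 0 := by
    rintro rfl
    norm_num at hr
  have hden : Complex.sin y - r ≠ 0 := sub_ne_zero.mpr hy
  have hquot := (hasDerivAt_cliffordNumerator hr y).div
    ((Complex.hasDerivAt_sin y).sub_const r) hden
  have hcoupling : 2 * I * cliffordPotential r y * cliffordProfile (-r) (-y)
      = I * Complex.sin y * r / 2 * cliffordNumerator (-r) (-y) / (Complex.sin y - r) ^ 2 := by
    have hden' : r - Complex.sin y ≠ 0 := sub_ne_zero.mpr hy.symm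
    rw [cliffordPotential, cliffordProfile, Complex.sin_neg, neg_sub_neg,
      sub_sq_comm (Complex.sin y)]
    field_simp
    linear_combination -Complex.sin y * cliffordNumerator (-r) (-y) * hr
  refine hquot.congr_deriv ?_
  rw [hcoupling, cliffordProfile]
  field_simp
  linear_combination 2 * cliffordNumerator_reflection hr y

lemma hasDerivAt_neg_cliffordProfile_neg (hr : r ^ 2 = 2) {y : ℂ} (hy : Complex.sin y ≠ r) :
    HasDerivAt (fun t => -cliffordProfile (-r) (-t))
      (cliffordProfile (-r) (-y) / 2 - 2 * I * cliffordPotential r y * cliffordProfile r y) y := by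
  have hprofile : HasDerivAt (cliffordProfile (-r)) _ (-y) :=
    hasDerivAt_cliffordProfile (by rwa [neg_sq]) (by simpa using hy)
  refine (hprofile.scomp y (hasDerivAt_neg y)).neg.congr_deriv ?_
  simp only [cliffordPotential_neg_neg, neg_neg, smul_eq_mul]
  ring

end SquareRootOfTwo

lemma ofReal_sqrt_two_sq : (Real.sqrt 2 : ℂ) ^ 2 = 2 := by
  exact_mod_cast Real.sq_sqrt (zero_le_two (α := ℝ))

lemma sin_ne_sqrt_two (y : ℝ) : Real.sin y ≠ Real.sqrt 2 :=
  ((Real.sin_le_one y).trans_lt Real.one_lt_sqrt_two).ne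

lemma cliffordU_eq_cliffordPotential (x y : ℝ) :
    cliffordU x y = cliffordPotential (Real.sqrt 2 : ℝ) y := by
  simp [cliffordU, cliffordPotential]

lemma cliffordPsi₁_eq_exp_mul_cliffordProfile :
    cliffordPsi₁ = fun x y : ℝ =>
      Complex.exp (-I / 2 * x) * cliffordProfile (Real.sqrt 2 : ℝ) y := by
  funext x y
  rw [cliffordPsi₁, cliffordProfile, cliffordNumerator, Complex.ofReal_sin, ← mul_div_assoc,
    mul_div_right_comm (-I)]
  congr 1
  linear_combination -(Complex.exp (-I / 2 * x) * Real.sqrt 2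
    * Complex.exp (-I * y / 2)) / 4 * I_sq

lemma cliffordPsi₂_eq_exp_mul_cliffordProfile :
    cliffordPsi₂ = fun x y : ℝ =>
      Complex.exp (-I / 2 * x) * -cliffordProfile (-(Real.sqrt 2 : ℝ)) (-y) := by
  funext x y
  have hden : Complex.sin (-y) - -(Real.sqrt 2 : ℝ) = -(Complex.sin y - (Real.sqrt 2 : ℝ)) := by
    rw [Complex.sin_neg]
    ring
  rw [cliffordPsi₂, cliffordProfile, cliffordNumerator, hden, Complex.ofReal_sin, div_neg, neg_neg,
    ← mul_div_assoc, neg_mul_neg I, mul_neg I, ← neg_mul I, mul_div_right_comm (-I) (x : ℂ)]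
  congr 1
  linear_combination Complex.exp (-I / 2 * x) * (1 + I)
    * Complex.exp (-I * y / 2) / 4 * ofReal_sqrt_two_sq

/-- The Baker–Akhiezer function of the Clifford torus at λ = (1−i)/4 satisfies
the Dirac equation with the Clifford torus potential. -/
theorem clifford_torus_dirac_equation (x y : ℝ) :
    wirtingerD cliffordPsi₂ x y + cliffordU x y * cliffordPsi₁ x y = 0 ∧
    -wirtingerDbar cliffordPsi₁ x y + cliffordU x y * cliffordPsi₂ x y = 0 := by
  have hy : Complex.sin y ≠ (Real.sqrt 2 : ℝ) := by exact_mod_cast sin_ne_sqrt_two y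
  have h₁ := (hasDerivAt_cliffordProfile ofReal_sqrt_two_sq hy).comp_ofReal
  have h₂ := (hasDerivAt_neg_cliffordProfile_neg ofReal_sqrt_two_sq hy).comp_ofReal
  have hrate : I * (-I / 2) = 1 / 2 := by linear_combination -I_sq / 2
  rw [cliffordU_eq_cliffordPotential, cliffordPsi₁_eq_exp_mul_cliffordProfile,
    cliffordPsi₂_eq_exp_mul_cliffordProfile]
  refine dirac_equation_exp_mul (-I / 2) _ x (h₁.congr_deriv ?_) (h₂.congr_deriv ?_)
  · rw [hrate]
    ring
  · rw [hrate]
    ring
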